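/- Let γ₄ = [[i,1−i],[0,−i]] ∈ SL(2,ℤ[i]). A matrix M ∈ SL(2,ℤ[i]) satisfies M·γ₄·M⁻¹ = γ₄ or M·γ₄·M⁻¹ = −γ₄ if and only if M belongs to the eight-element set {±Id, ±γ₄, ±[[i,0],[1+i,−i]], ±[[1,−1−i],[1−i,−1]]}. (Equivalently, the centralizer of γ₄ in SL(2,ℤ[i])/{±Id} is the four-element group with representatives Id, γ₄, [[i,0],[1+i,−i]], [[1,−1−i],[1−i,−1]].) -/

import Mathlib

/-! Conjugation is cleared to the linear conditions `M γ₄ = ± γ₄ M`. With `M = [[a, b], [c, d]]`,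
commuting forces `c = 0` and `a - d = (i - 1) b`, so the determinant gives `a d = 1`; anticommuting
forces `c = (1 - i) a` and `d = -a`, so the determinant gives `a (a + (1 - i) b) = -1`. Either way
`a` is a unit of `ℤ[i]`, hence one of `±1, ±i` (`eq_of_mul_eq_one`), and each value of `a`
determines `b`, `c` and `d`.
-/

/-- `SL(2, ℤ[i])`, the special linear group over the Gaussian integers. -/
abbrev SL2Zi : Type := Matrix.SpecialLinearGroup (Fin 2) GaussianInt

/-- The imaginary unit `i` in the Gaussian integers `ℤ[i]`. -/
def gi : GaussianInt := ⟨0, 1⟩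

/-- Build an element of `SL(2, ℤ[i])` from its four entries and a determinant condition. -/
def Mk (a b c d : GaussianInt) (h : a * d - b * c = 1) : SL2Zi :=
  ⟨!![a, b; c, d], by simpa [Matrix.det_fin_two_of] using h⟩

/-- `γ₄ = [[i, 1-i], [0, -i]]` in `SL(2, ℤ[i])`. -/
def γ₄ : SL2Zi := Mk gi (1 - gi) 0 (-gi) (by decide)

/-- `[[i, 0], [1+i, -i]]` in `SL(2, ℤ[i])`. -/
def W₁ : SL2Zi := Mk gi 0 (1 + gi) (-gi) (by decide)

/-- `[[1, -1-i], [1-i, -1]]` in `SL(2, ℤ[i])`. -/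
def W₂ : SL2Zi := Mk 1 (-1 - gi) (1 - gi) (-1) (by decide)

/-- The units of `ℤ[i]` are `±1` and `±i`. -/
lemma eq_of_mul_eq_one {a x : GaussianInt} (h : a * x = 1) :
    a = 1 ∨ a = -1 ∨ a = gi ∨ a = -gi := by
  have h1 : a.norm = 1 := by
    have := (Zsqrtd.norm_eq_one_iff' (by norm_num) a).2 (IsUnit.of_mul_eq_one x h)
    exact this
  rw [Zsqrtd.norm_def] at h1
  have hr1 : a.re ≤ 1 := by nlinarith [mul_self_nonneg a.im]
  have hr2 : -1 ≤ a.re := by nlinarith [mul_self_nonneg a.im]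
  have hi1 : a.im ≤ 1 := by nlinarith [mul_self_nonneg a.re]
  have hi2 : -1 ≤ a.im := by nlinarith [mul_self_nonneg a.re]
  obtain ⟨r, s⟩ := a
  simp only at *
  interval_cases r <;> interval_cases s <;> first | omega | decide

/-- Solutions of `M γ₄ = γ₄ M` with `det M = 1`; the first row of the equation already suffices. -/
lemma solve_comm {a b c d : GaussianInt} (hdet : a * d - b * c = 1)
    (h00 : a * gi = gi * a + (1 - gi) * c)
    (h01 : a * (1 - gi) + b * (-gi) = gi * b + (1 - gi) * d) :
    c = 0 ∧ ((a = 1 ∧ b = 0 ∧ d = 1) ∨ (a = -1 ∧ b = 0 ∧ d = -1) ∨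
      (a = gi ∧ b = 1 - gi ∧ d = -gi) ∨ (a = -gi ∧ b = -(1 - gi) ∧ d = gi)) := by
  have hc : c = 0 := by
    simp [Zsqrtd.ext_iff, gi] at h00 ⊢
    omega
  subst hc
  have hu : a * d = 1 := by simpa using hdet
  refine ⟨rfl, ?_⟩
  rcases eq_of_mul_eq_one hu with rfl | rfl | rfl | rfl <;>
  · simp [Zsqrtd.ext_iff, gi] at hu h01 ⊢
    omega

/-- Solutions of `M γ₄ = -γ₄ M` with `det M = 1`; the first row of the equation already suffices. -/
lemma solve_anti {a b c d : GaussianInt} (hdet : a * d - b * c = 1)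
    (h00 : a * gi = -(gi * a + (1 - gi) * c))
    (h01 : a * (1 - gi) + b * (-gi) = -(gi * b + (1 - gi) * d)) :
    (a = gi ∧ b = 0 ∧ c = 1 + gi ∧ d = -gi) ∨ (a = -gi ∧ b = 0 ∧ c = -(1 + gi) ∧ d = gi) ∨
      (a = 1 ∧ b = -1 - gi ∧ c = 1 - gi ∧ d = -1) ∨
      (a = -1 ∧ b = -(-1 - gi) ∧ c = -(1 - gi) ∧ d = 1) := by
  have hd : d = -a := by
    simp [Zsqrtd.ext_iff, gi] at h01 ⊢
    omega
  have hc : c = (1 - gi) * a := by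
    simp [Zsqrtd.ext_iff, gi] at h00 ⊢
    omega
  subst hd hc
  have hu : a * (-(a + (1 - gi) * b)) = 1 := by linear_combination hdet
  rcases eq_of_mul_eq_one hu with rfl | rfl | rfl | rfl <;>
  · simp [Zsqrtd.ext_iff, gi] at hu ⊢
    omega

lemma conj_eq_neg_iff (M g : SL2Zi) :
    (↑(M * g * M⁻¹) : Matrix (Fin 2) (Fin 2) GaussianInt) = -g.1 ↔ M.1 * g.1 = -(g.1 * M.1) := by
  have h1 : (M⁻¹).1 * M.1 = 1 := congrArg Subtype.val (inv_mul_cancel M)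
  have h2 : M.1 * (M⁻¹).1 = 1 := congrArg Subtype.val (mul_inv_cancel M)
  change M.1 * g.1 * (M⁻¹).1 = -g.1 ↔ _
  constructor
  · intro h
    rw [← neg_mul, ← h, mul_assoc, h1, mul_one]
  · intro h
    rw [h, neg_mul, mul_assoc, h2, mul_one]

/-- A matrix `M ∈ SL(2,ℤ[i])` satisfies `Mγ₄M⁻¹ = ±γ₄` for
`γ₄ = [[i,1-i],[0,-i]]` if and only if `M` is one of the eight elements
`±Id, ±γ₄, ±[[i,0],[1+i,-i]], ±[[1,-1-i],[1-i,-1]]`; i.e. the centralizer of `γ₄` in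
`SL(2,ℤ[i])/{±Id}` is the four-element group
`{Id, γ₄, [[i,0],[1+i,-i]], [[1,-1-i],[1-i,-1]]}`. -/
theorem statement6 (M : SL2Zi) :
    (M * γ₄ * M⁻¹ = γ₄ ∨
      (↑(M * γ₄ * M⁻¹) : Matrix (Fin 2) (Fin 2) GaussianInt)
        = -(↑γ₄ : Matrix (Fin 2) (Fin 2) GaussianInt)) ↔
    (M = 1 ∨ (↑M : Matrix (Fin 2) (Fin 2) GaussianInt) = -(1 : Matrix (Fin 2) (Fin 2) GaussianInt) ∨
     M = γ₄ ∨ (↑M : Matrix (Fin 2) (Fin 2) GaussianInt) = -(↑γ₄ : Matrix (Fin 2) (Fin 2) GaussianInt) ∨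
     M = W₁ ∨ (↑M : Matrix (Fin 2) (Fin 2) GaussianInt) = -(↑W₁ : Matrix (Fin 2) (Fin 2) GaussianInt) ∨
     M = W₂ ∨ (↑M : Matrix (Fin 2) (Fin 2) GaussianInt) = -(↑W₂ : Matrix (Fin 2) (Fin 2) GaussianInt)) := by
  have ext_coe (X Y : SL2Zi) : X = Y ↔ X.1 = Y.1 := Subtype.ext_iff
  rw [conj_eq_neg_iff, mul_inv_eq_iff_eq_mul, ext_coe, ext_coe M 1, ext_coe M γ₄, ext_coe M W₁,
    ext_coe M W₂]
  obtain ⟨A, hA⟩ := M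
  obtain ⟨a, b, c, d, rfl⟩ : ∃ a b c d, A = !![a, b; c, d] := ⟨_, _, _, _, Matrix.eta_fin_two A⟩
  rw [Matrix.det_fin_two_of] at hA
  change (!![a, b; c, d] * !![gi, 1 - gi; 0, -gi] = !![gi, 1 - gi; 0, -gi] * !![a, b; c, d] ∨
      !![a, b; c, d] * !![gi, 1 - gi; 0, -gi] = -(!![gi, 1 - gi; 0, -gi] * !![a, b; c, d])) ↔
    !![a, b; c, d] = 1 ∨ !![a, b; c, d] = -1 ∨
    !![a, b; c, d] = !![gi, 1 - gi; 0, -gi] ∨ !![a, b; c, d] = -!![gi, 1 - gi; 0, -gi] ∨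
    !![a, b; c, d] = !![gi, 0; 1 + gi, -gi] ∨ !![a, b; c, d] = -!![gi, 0; 1 + gi, -gi] ∨
    !![a, b; c, d] = !![1, -1 - gi; 1 - gi, -1] ∨ !![a, b; c, d] = -!![1, -1 - gi; 1 - gi, -1]
  simp only [Matrix.one_fin_two, Matrix.mul_fin_two, mul_zero, zero_mul, add_zero,
    ← Matrix.ext_iff, Fin.forall_fin_two, Matrix.neg_apply, Matrix.of_apply, Matrix.cons_val',
    Matrix.cons_val_zero, Matrix.cons_val_one, Matrix.cons_val_fin_one]
  constructor
  · rintro (⟨⟨h00, h01⟩, -⟩ | ⟨⟨h00, h01⟩, -⟩)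
    · obtain ⟨rfl, h⟩ := solve_comm hA h00 h01
      rcases h with ⟨rfl, rfl, rfl⟩ | ⟨rfl, rfl, rfl⟩ | ⟨rfl, rfl, rfl⟩ | ⟨rfl, rfl, rfl⟩ <;> decide
    · rcases solve_anti hA h00 h01 with
        ⟨rfl, rfl, rfl, rfl⟩ | ⟨rfl, rfl, rfl, rfl⟩ | ⟨rfl, rfl, rfl, rfl⟩ | ⟨rfl, rfl, rfl, rfl⟩ <;>
        decide
  · rintro (⟨⟨rfl, rfl⟩, rfl, rfl⟩ | ⟨⟨rfl, rfl⟩, rfl, rfl⟩ | ⟨⟨rfl, rfl⟩, rfl, rfl⟩ |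
      ⟨⟨rfl, rfl⟩, rfl, rfl⟩ | ⟨⟨rfl, rfl⟩, rfl, rfl⟩ | ⟨⟨rfl, rfl⟩, rfl, rfl⟩ |
      ⟨⟨rfl, rfl⟩, rfl, rfl⟩ | ⟨⟨rfl, rfl⟩, rfl, rfl⟩) <;> decide
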